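/- For every natural number n and all tuples a : Fin n → ℂ and ε : Fin n → ℂ, there exists a polynomial P in two variables over ℂ such that for all z, w ∈ ℂ and every choice of square roots s : Fin n → ℂ satisfying (s k)² = z − a k for all k, one has P(z, w) = ∏_{σ} (w − ∑_{k} σ(k) · ε(k) · s(k)), where the product ranges over all sign functions σ : Fin n → {1, −1}. In particular, the value of this product is independent of the choice of the square roots s. -/

import Mathlib

open scoped BigOperators

/-!
Put `cₖ = εₖ² (z - aₖ)`, an element of `A = ℂ[z, w]`, and consider `w - ∑ₖ √cₖ` in the iterated
quadratic extension `A[√c₀] ⋯ [√cₙ₋₁]`. Its norm down to `A` is the required polynomial: under any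
evaluation of `z` and `w`, each norm from `A[√c]` to `A` becomes the product over the two ways
`√c ↦ ± s` of extending that evaluation, and these choices multiply up to all sign functions.
-/

section QuadraticExtension

variable {A B : Type*} [CommRing A] [CommRing B] (φ : A →+* B) {c : A} {s : B}

/-- The extension of a ring homomorphism `φ : A →+* B` to `A[√c]` that sends `√c` to a given square
root `s` of `φ c`. The ring `A[√c]` is encoded as `QuadraticAlgebra A c 0`. -/
def sqrtLift (hs : s ^ 2 = φ c) : QuadraticAlgebra A c 0 →+* B :=
  letI := φ.toAlgebra
  (QuadraticAlgebra.lift ⟨s, by simp [← sq, hs, Algebra.smul_def, φ.algebraMap_toAlgebra]⟩ :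
    QuadraticAlgebra A c 0 →ₐ[A] B).toRingHom

lemma sqrtLift_apply (hs : s ^ 2 = φ c) (x : QuadraticAlgebra A c 0) :
    sqrtLift φ hs x = φ x.re + φ x.im * s := by
  let := φ.toAlgebra
  simp [sqrtLift, QuadraticAlgebra.lift, Algebra.smul_def, φ.algebraMap_toAlgebra]

lemma sqrtLift_algebraMap (hs : s ^ 2 = φ c) (x : A) :
    sqrtLift φ hs (algebraMap A _ x) = φ x := by
  simp [sqrtLift_apply]

lemma sqrtLift_omega (hs : s ^ 2 = φ c) : sqrtLift φ hs QuadraticAlgebra.omega = s := by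
  simp [sqrtLift_apply]

lemma sqrtLift_star (hs : s ^ 2 = φ c) (x : QuadraticAlgebra A c 0) :
    sqrtLift φ hs (star x) = sqrtLift φ ((neg_sq s).trans hs) x := by
  simp [sqrtLift_apply]

lemma map_norm_eq_sqrtLift_mul_sqrtLift_neg (hs : s ^ 2 = φ c) (x : QuadraticAlgebra A c 0) :
    φ (QuadraticAlgebra.norm x) = sqrtLift φ hs x * sqrtLift φ ((neg_sq s).trans hs) x := by
  rw [← sqrtLift_algebraMap φ hs, QuadraticAlgebra.algebraMap_norm_eq_mul_star, map_mul,
    sqrtLift_star]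

end QuadraticExtension

/-- The product of `w - (± s₀ ± ⋯ ± sₙ₋₁)` over all choices of signs, where the Boolean `true`
stands for the sign `+`. -/
def signedSumProd {R : Type*} [CommRing R] {n : ℕ} (s : Fin n → R) (w : R) : R :=
  ∏ σ : Fin n → Bool, (w - ∑ k, (if σ k then 1 else -1) * s k)

lemma signedSumProd_zero {R : Type*} [CommRing R] (s : Fin 0 → R) (w : R) :
    signedSumProd s w = w := by
  simp [signedSumProd]

lemma prod_fin_succ_bool {M : Type*} [CommMonoid M] {n : ℕ} (f : (Fin (n + 1) → Bool) → M) :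
    ∏ σ, f σ = (∏ σ, f (Fin.cons true σ)) * ∏ σ, f (Fin.cons false σ) := by
  rw [← (Fin.consEquiv fun _ => Bool).prod_comp, Fintype.prod_prod_type, Fintype.prod_bool]
  rfl

lemma signedSumProd_succ {R : Type*} [CommRing R] {n : ℕ} (s : Fin (n + 1) → R) (w : R) :
    signedSumProd s w =
      signedSumProd (Fin.tail s) (w - s 0) * signedSumProd (Fin.tail s) (w + s 0) := by
  simp [signedSumProd, prod_fin_succ_bool, Fin.sum_univ_succ, Fin.tail, sub_add_eq_sub_sub]

/-- The norm of `w - ∑ₖ √cₖ` from `A[√c₀] ⋯ [√cₙ₋₁]` down to `A`, taken one quadratic extension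
at a time. -/
def sqrtSumNorm : {n : ℕ} → {A : Type*} → [CommRing A] → (Fin n → A) → A → A
  | 0, _, _, _, w => w
  | _ + 1, A, _, c, w =>
    QuadraticAlgebra.norm (a := c 0) (b := 0)
      (sqrtSumNorm (fun k => algebraMap A (QuadraticAlgebra A (c 0) 0) (c k.succ))
        (algebraMap A (QuadraticAlgebra A (c 0) 0) w - QuadraticAlgebra.omega))

theorem map_sqrtSumNorm {A B : Type*} [CommRing A] [CommRing B] (φ : A →+* B) {n : ℕ}
    {c : Fin n → A} {s : Fin n → B} (hs : ∀ k, s k ^ 2 = φ (c k)) (w : A) :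
    φ (sqrtSumNorm c w) = signedSumProd s (φ w) := by
  induction n generalizing A with
  | zero => rw [sqrtSumNorm, signedSumProd_zero]
  | succ n ih =>
    have lift_sqrtSumNorm {t : B} (ht : t ^ 2 = φ (c 0)) :
        sqrtLift φ ht (sqrtSumNorm (fun k => algebraMap A _ (c k.succ))
            (algebraMap A _ w - QuadraticAlgebra.omega)) =
          signedSumProd (Fin.tail s) (φ w - t) := by
      rw [ih (s := Fin.tail s) _ fun k => by rw [sqrtLift_algebraMap]; exact hs k.succ, map_sub,
        sqrtLift_algebraMap, sqrtLift_omega]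
    rw [sqrtSumNorm, map_norm_eq_sqrtLift_mul_sqrtLift_neg φ (hs 0), lift_sqrtSumNorm,
      lift_sqrtSumNorm, sub_neg_eq_add, signedSumProd_succ]

theorem stmt_0_general {R : Type*} [CommRing R] (n : ℕ) (a ε : Fin n → R) :
    ∃ P : MvPolynomial (Fin 2) R,
      ∀ z w : R, ∀ s : Fin n → R, (∀ k, (s k) ^ 2 = z - a k) →
        MvPolynomial.eval ![z, w] P =
          ∏ σ : Fin n → Bool, (w - ∑ k, (if σ k then (1 : R) else -1) * ε k * s k) := by
  let c (k : Fin n) : MvPolynomial (Fin 2) R :=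
    MvPolynomial.C (ε k) ^ 2 * (MvPolynomial.X 0 - MvPolynomial.C (a k))
  refine ⟨sqrtSumNorm c (MvPolynomial.X 1), fun z w s hs => ?_⟩
  have sq_eq (k : Fin n) : (ε k * s k) ^ 2 = MvPolynomial.eval ![z, w] (c k) := by
    simp [c, mul_pow, hs]
  simp [map_sqrtSumNorm _ sq_eq, signedSumProd]

/-- For all `n`, points `a : Fin n → ℂ` and coefficients `ε : Fin n → ℂ`, there is a
polynomial `P` in two variables such that for all `z w : ℂ` and every choice of square
roots `s : Fin n → ℂ` with `(s k)² = z - a k`, the value `P (z, w)` equals the product of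
`w - ∑ k, σ k • ε k • s k` over all sign functions `σ : Fin n → {1, -1}` (encoded as
`σ : Fin n → Bool`, with `true ↦ 1` and `false ↦ -1`). In particular, this product does
not depend on the choice of the square roots `s`. -/
theorem stmt_0 (n : ℕ) (a ε : Fin n → ℂ) :
    ∃ P : MvPolynomial (Fin 2) ℂ,
      ∀ z w : ℂ, ∀ s : Fin n → ℂ, (∀ k, (s k) ^ 2 = z - a k) →
        MvPolynomial.eval ![z, w] P =
          ∏ σ : Fin n → Bool,
            (w - ∑ k, (if σ k then (1 : ℂ) else -1) * ε k * s k) :=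
  stmt_0_general n a ε
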